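/- arXiv:2411.11634 — 2 statements merged into one kernel-verified Lean document; each statement's English description precedes it below -/
import Mathlib

section
/- Let A ∈ M_n(ℤ) be non-singular with h_A irreducible over ℚ and P'(A) ≠ ∅, and assume there exists a prime p with gcd(n, t_p) = 1. Then every matrix T ∈ M_n(ℚ) with T·x ∈ G_A for all x ∈ G_A commutes with A, i.e., T·A = A·T. -/
open Matrix Polynomial

noncomputable section

/-- The matrix `A` viewed over `ℚ`. -/
def Aq {n : ℕ} (A : Matrix (Fin n) (Fin n) ℤ) : Matrix (Fin n) (Fin n) ℚ :=
  A.map (Int.cast : ℤ → ℚ)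

/-- The group `G_A = {A^k x : x ∈ ℤ^n, k ∈ ℤ} ⊆ ℚ^n`. -/
def GA {n : ℕ} (A : Matrix (Fin n) (Fin n) ℤ) : Set (Fin n → ℚ) :=
  {v | ∃ (k : ℤ) (x : Fin n → ℤ), v = (Aq A ^ k) *ᵥ fun i => ((x i : ℚ))}

/-- `P'(A)`: primes dividing `det A` such that `h_A ≢ x^n (mod p)`. -/
def Pbad {n : ℕ} (A : Matrix (Fin n) (Fin n) ℤ) : Set ℕ :=
  {p | p.Prime ∧ (p : ℤ) ∣ A.det ∧ A.charpoly.map (Int.castRingHom (ZMod p)) ≠ X ^ n}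

/-- `t_p`: multiplicity of `0` as a root of `h_A` mod `p`. -/
def tp {n : ℕ} (A : Matrix (Fin n) (Fin n) ℤ) (p : ℕ) : ℕ :=
  Polynomial.rootMultiplicity 0 (A.charpoly.map (Int.castRingHom (ZMod p)))

theorem comb {G Ω : Type*} [Group G] [Fintype G] [DecidableEq Ω] [MulAction G Ω]
    (s S : Finset Ω) (hS : S ⊆ s) (hstab : ∀ (g : G), ∀ x ∈ s, g • x ∈ s)
    (htr : ∀ x ∈ s, ∀ y ∈ s, ∃ g : G, g • x = y) (hg : Nat.gcd s.card S.card = 1)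
    (i j : Ω) (hi : i ∈ s) (hj : j ∈ s) (h : ∀ g : G, g • j ∈ S → g • i ∈ S) : i = j := by
  classical
  let N : Ω → Finset G := fun x => Finset.univ.filter (fun g => g • x ∈ S)
  have hNmem : ∀ x g, g ∈ N x ↔ g • x ∈ S := fun x g => by simp [N]
  have hNcard : ∀ x (g : G), (N (g • x)).card = (N x).card := by
    intro x g
    refine Finset.card_bij' (fun a _ => a * g) (fun a _ => a * g⁻¹) ?_ ?_ ?_ ?_
    · intro a ha; rw [hNmem] at *; rwa [mul_smul]
    · intro a ha; rw [hNmem] at *; rwa [mul_smul, inv_smul_smul]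
    · simp
    · simp
  have hNij : N j = N i := by
    refine Finset.eq_of_subset_of_card_le (fun g hg => ?_) ?_
    · rw [hNmem] at *; exact h g hg
    · obtain ⟨g, rfl⟩ := htr i hi j hj
      rw [hNcard]
  have hNinv : ∀ x y (g : G), N x = N y → N (g • x) = N (g • y) := by
    intro x y g hxy
    ext a
    have := Finset.ext_iff.1 hxy (a * g)
    simpa [hNmem, mul_smul] using this
  have hfib : ∀ x ∈ s, (s.filter (fun y => N y = N x)).card = (s.filter (fun y => N y = N j)).card := by
    intro x hx
    obtain ⟨g, rfl⟩ := htr j hj x hx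
    refine Finset.card_bij' (fun a _ => g⁻¹ • a) (fun a _ => g • a) ?_ ?_ ?_ ?_
    · intro a ha
      rw [Finset.mem_filter] at *
      refine ⟨hstab _ _ ha.1, ?_⟩
      have := hNinv _ _ g⁻¹ ha.2
      rwa [inv_smul_smul] at this
    · intro a ha
      rw [Finset.mem_filter] at *
      exact ⟨hstab _ _ ha.1, hNinv _ _ g ha.2⟩
    · simp
    · simp
  set b := (s.filter (fun y => N y = N j)).card with hb
  have hdvd : ∀ S' ⊆ s, (∀ x ∈ S', ∀ y ∈ s, N y = N x → y ∈ S') → b ∣ S'.card := by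
    intro S' hS' hsat
    rw [Finset.card_eq_sum_card_image N S']
    refine Finset.dvd_sum fun y hy => ?_
    obtain ⟨x, hx, rfl⟩ := Finset.mem_image.1 hy
    rw [← hfib x (hS' hx)]
    apply dvd_of_eq
    congr 1
    ext z
    simp only [Finset.mem_filter]
    exact ⟨fun hz => ⟨hsat x hx z hz.1 hz.2, hz.2⟩, fun hz => ⟨hS' hz.1, hz.2⟩⟩
  have h1 : b ∣ s.card := hdvd s subset_rfl (fun _ _ y hy _ => hy)
  have h2 : b ∣ S.card := hdvd S hS (fun x hx y hy hxy => by
    have := Finset.ext_iff.1 hxy 1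
    simpa [hNmem, hx] using this)
  have hb1 : b = 1 := Nat.dvd_one.1 (hg ▸ Nat.dvd_gcd h1 h2)
  exact Finset.card_le_one.1 hb1.le i (by simp [hi, hNij]) j (by simp [hj])

theorem Aq_pow {n : ℕ} (A : Matrix (Fin n) (Fin n) ℤ) (k : ℕ) :
    Aq A ^ k = (A ^ k).map (Int.cast : ℤ → ℚ) := by
  unfold Aq
  exact (map_pow (Int.castRingHom ℚ).mapMatrix A k).symm

theorem exists_B (n : ℕ) (A : Matrix (Fin n) (Fin n) ℤ) (hA : A.det ≠ 0)
    (T : Matrix (Fin n) (Fin n) ℚ) (hT : ∀ v ∈ GA A, T *ᵥ v ∈ GA A) (k : ℕ) :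
    ∃ (m : ℕ) (B : Matrix (Fin n) (Fin n) ℤ),
      Aq A ^ m * T = B.map (Int.cast : ℤ → ℚ) * Aq A ^ k := by
  have hdet : IsUnit (Aq A).det := by
    have : (Aq A).det = (A.det : ℚ) := ((Int.castRingHom ℚ).map_det A).symm
    rw [this]; exact isUnit_iff_ne_zero.2 (by exact_mod_cast hA)
  have h1 : ∀ j : Fin n, ∃ (l : ℤ) (x : Fin n → ℤ),
      T *ᵥ ((Aq A ^ (-(k:ℤ))) *ᵥ (Pi.single j 1)) = (Aq A ^ l) *ᵥ fun i => ((x i : ℚ)) := by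
    intro j
    refine hT _ ⟨-(k:ℤ), Pi.single j 1, ?_⟩
    congr 1
    ext i
    by_cases h : i = j
    · subst h; simp
    · simp [h]
  choose l x hx using h1
  obtain ⟨m, hm⟩ : ∃ m : ℕ, ∀ j, 0 ≤ (m : ℤ) + l j := by
    refine ⟨∑ j, (l j).natAbs, fun j => ?_⟩
    have := Finset.single_le_sum (f := fun j => (l j).natAbs) (fun _ _ => Nat.zero_le _)
      (Finset.mem_univ j)
    omega
  choose r hr using fun j => Int.eq_ofNat_of_zero_le (hm j)
  refine ⟨m, Matrix.of fun i j => (A ^ r j *ᵥ x j) i, ?_⟩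
  have key : Aq A ^ m * T * Aq A ^ (-(k:ℤ)) =
      (Matrix.of fun i j => (A ^ r j *ᵥ x j) i).map (Int.cast : ℤ → ℚ) := by
    ext i j
    have h2 := congrArg (fun v => (Aq A ^ m *ᵥ v) i) (hx j)
    simp only [Matrix.mulVec_mulVec] at h2
    rw [← zpow_natCast (Aq A) m, ← Matrix.zpow_add hdet, hr, zpow_natCast, zpow_natCast,
      ← Matrix.mul_assoc, Matrix.mulVec_single_one] at h2
    simp only [Matrix.col_apply] at h2
    rw [h2, Aq_pow]
    simp [Matrix.mulVec, dotProduct]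
  rw [← key, Matrix.mul_assoc, ← zpow_natCast (Aq A) k, ← Matrix.zpow_add hdet]
  simp


theorem count_lemma {R ι : Type*} [CommRing R] (P : Ideal R) [P.IsPrime] (p : ℕ)
    (hp : p.Prime) (hpP : (p : R) ∈ P) (h : ℤ[X]) (s : Finset ι) (ρ : ι → R)
    [DecidablePred fun i => ρ i ∈ P]
    (hh : h.map (Int.castRingHom R) = ∏ i ∈ s, (X - C (ρ i))) :
    Polynomial.rootMultiplicity 0 (h.map (Int.castRingHom (ZMod p))) =
      (s.filter (fun i => ρ i ∈ P)).card := by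
  classical
  have : Fact p.Prime := ⟨hp⟩
  have : CharP (R ⧸ P) p := by
    have h0 : (p : R ⧸ P) = 0 := by
      rw [← map_natCast (Ideal.Quotient.mk P)]
      exact Ideal.Quotient.eq_zero_iff_mem.2 hpP
    have h1 := ringChar.spec (R ⧸ P) p
    rw [h0] at h1
    have h2 : ringChar (R ⧸ P) ∣ p := h1.1 rfl
    rcases (Nat.dvd_prime hp).1 h2 with h3 | h3
    · exact absurd h3 CharP.ringChar_ne_one
    · exact (ringChar.eq_iff).1 h3
  let f : ZMod p →+* (R ⧸ P) := ZMod.castHom dvd_rfl _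
  have hf : Function.Injective f := f.injective
  rw [Polynomial.eq_rootMultiplicity_map hf, Polynomial.map_map, map_zero]
  have e1 : f.comp (Int.castRingHom (ZMod p)) =
      (Ideal.Quotient.mk P).comp (Int.castRingHom R) := RingHom.ext_int _ _
  rw [e1, ← Polynomial.map_map, hh, Polynomial.map_prod]
  simp only [Polynomial.map_sub, Polynomial.map_X, Polynomial.map_C]
  rw [← Polynomial.count_roots, Polynomial.roots_prod _ _
    (Finset.prod_ne_zero_iff.2 fun i _ => Polynomial.X_sub_C_ne_zero _)]
  simp only [Polynomial.roots_X_sub_C, Multiset.bind_singleton]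
  rw [Multiset.count_map, Finset.card_def, Finset.filter_val]
  congr 1
  apply Multiset.filter_congr
  intro i _
  rw [eq_comm, Ideal.Quotient.eq_zero_iff_mem]

theorem key_zero {n : ℕ} {L : Type*} [Field L] [NumberField L]
    (A : Matrix (Fin n) (Fin n) ℤ)
    (T : Matrix (Fin n) (Fin n) ℚ)
    (hB : ∀ k : ℕ, ∃ (m : ℕ) (B : Matrix (Fin n) (Fin n) ℤ),
      Aq A ^ m * T = B.map (Int.cast : ℤ → ℚ) * Aq A ^ k)
    (P : Ideal (NumberField.RingOfIntegers L)) [hPp : P.IsPrime]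
    (a b : NumberField.RingOfIntegers L) (ha : a ∉ P) (hb : b ∈ P)
    (F G : Matrix (Fin n) (Fin n) L)
    (hF : F * A.map (Int.cast : ℤ → L) = (a : L) • F)
    (hG : A.map (Int.cast : ℤ → L) * G = (b : L) • G) :
    F * T.map (algebraMap ℚ L) * G = 0 := by
  let R := NumberField.RingOfIntegers L
  -- clear denominators
  have hden : ∀ M : Matrix (Fin n) (Fin n) L, ∃ (d : R) (M' : Matrix (Fin n) (Fin n) R),
      d ≠ 0 ∧ (d : L) • M = M'.map (algebraMap R L) := by
    intro M
    obtain ⟨d, hd⟩ := IsLocalization.exist_integer_multiples_of_finite (nonZeroDivisors R)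
      (fun ij : Fin n × Fin n => M ij.1 ij.2)
    choose g hg using hd
    refine ⟨d, Matrix.of fun i j => g (i, j), nonZeroDivisors.ne_zero d.2, ?_⟩
    ext i j
    have := hg (i, j)
    simp only [Matrix.map_apply, Matrix.of_apply, Matrix.smul_apply]
    rw [this]
    rfl
  obtain ⟨d1, F', hd1, hF'⟩ := hden F
  obtain ⟨d2, G', hd2, hG'⟩ := hden G
  obtain ⟨d3, Z', hd3, hZ'⟩ := hden (F * T.map (algebraMap ℚ L) * G)
  set AL := A.map (Int.cast : ℤ → L) with hAL
  have hAqmap : (Aq A).map (algebraMap ℚ L) = AL := by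
    ext i j; simp [Aq, hAL]
  have hFm : ∀ m : ℕ, F * AL ^ m = (a : L) ^ m • F := by
    intro m
    induction m with
    | zero => simp
    | succ m ih => rw [pow_succ, ← Matrix.mul_assoc, ih, Matrix.smul_mul, hF, smul_smul, pow_succ]
  have hGm : ∀ m : ℕ, AL ^ m * G = (b : L) ^ m • G := by
    intro m
    induction m with
    | zero => simp
    | succ m ih => rw [pow_succ, Matrix.mul_assoc, hG, Matrix.mul_smul, ih, smul_smul, pow_succ']
  have hPtop : P ≠ ⊤ := hPp.ne_top
  have hmem : ∀ (k : ℕ) (i j), d1 * d2 * Z' i j ∈ P ^ k := by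
    intro k i j
    obtain ⟨m, B, hmB⟩ := hB k
    have e1 : AL ^ m * T.map (algebraMap ℚ L) = B.map (Int.cast : ℤ → L) * AL ^ k := by
      have := congrArg (algebraMap ℚ L).mapMatrix hmB
      rw [map_mul, map_mul, map_pow, map_pow] at this
      simp only [RingHom.mapMatrix_apply] at this
      rw [hAqmap] at this
      rw [this]
      congr 1
      ext i j; simp
    have e2 : (a : L) ^ m • (F * T.map (algebraMap ℚ L) * G) =
        (b : L) ^ k • (F * B.map (Int.cast : ℤ → L) * G) := by
      rw [← Matrix.smul_mul, ← Matrix.smul_mul, ← hFm, Matrix.mul_assoc F, e1,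
        ← Matrix.mul_assoc, Matrix.mul_assoc, hGm, Matrix.mul_smul]
    have e3 : (a : L) ^ m • ((d1 * d2 : L) • Z'.map (algebraMap R L)) =
        (b : L) ^ k • (d3 : L) • (F'.map (algebraMap R L) * B.map (Int.cast : ℤ → L) *
          G'.map (algebraMap R L)) := by
      rw [← hF', ← hG', ← hZ']
      simp only [Matrix.smul_mul, Matrix.mul_smul, smul_smul]
      rw [show (a : L) ^ m * (d1 * d2 * d3) = (d1 * d2 * d3) * (a : L) ^ m by ring, mul_smul, e2,
        smul_smul]
      congr 1
      ring
    have e4 : a ^ m * (d1 * d2 * Z' i j) =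
        b ^ k * (d3 * (F' * B.map (Int.cast : ℤ → R) * G') i j) := by
      apply NumberField.RingOfIntegers.coe_injective
      have e5 : (F'.map (algebraMap R L) * B.map (Int.cast : ℤ → L) * G'.map (algebraMap R L)) =
          (F' * B.map (Int.cast : ℤ → R) * G').map (algebraMap R L) := by
        rw [Matrix.map_mul, Matrix.map_mul]
        have e7 : (B.map (Int.cast : ℤ → R)).map (algebraMap R L) = B.map (Int.cast : ℤ → L) := by
          ext i j
          simp only [Matrix.map_apply]
          exact map_intCast (algebraMap R L) _
        rw [e7]
      rw [e5] at e3
      have := congrFun (congrFun e3 i) j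
      simp only [Matrix.smul_apply, Matrix.map_apply, smul_eq_mul] at this
      simp only [map_mul, map_pow]
      exact this
    have e6 : a ^ m * (d1 * d2 * Z' i j) ∈ P ^ k := by
      rw [e4]
      exact Ideal.mul_mem_right _ _ (Ideal.pow_mem_pow hb k)
    rcases Ideal.IsPrime.mul_mem_pow P e6 with h | h
    · exact absurd (hPp.mem_of_pow_mem _ h) ha
    · exact h
  have hz : ∀ i j, Z' i j = 0 := by
    intro i j
    have h1 : d1 * d2 * Z' i j ∈ (⨅ k : ℕ, P ^ k) := by
      rw [Submodule.mem_iInf]; exact fun k => hmem k i j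
    rw [Ideal.iInf_pow_eq_bot_of_isDomain P hPtop] at h1
    simpa [hd1, hd2] using h1
  have hZ0 : (d3 : L) • (F * T.map (algebraMap ℚ L) * G) = 0 := by
    rw [hZ']; ext i j; simp [hz]
  exact (smul_eq_zero.1 hZ0).resolve_left (by
    intro h; apply hd3; exact NumberField.RingOfIntegers.coe_injective (by simpa using h))


theorem basis_map {L : Type*} [Field L] [DecidableEq L] (s : Finset L) (σ : L ≃+* L)
    (hσ : ∀ x, x ∈ s ↔ σ x ∈ s) (x : L) :
    (Lagrange.basis s id x).map (σ : L →+* L) = Lagrange.basis s id (σ x) := by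
  simp only [Lagrange.basis, Polynomial.map_prod, Lagrange.basisDivisor, id]
  refine Finset.prod_bij' (fun y _ => σ y) (fun y _ => σ.symm y) ?_ ?_ ?_ ?_ ?_
  · intro y hy
    simpa [← hσ] using hy
  · intro y hy
    rw [Finset.mem_erase] at *
    refine ⟨fun h => hy.1 ?_, ?_⟩
    · rw [← h]; simp
    · rw [hσ]; simpa using hy.2
  · simp
  · simp
  · intro y _
    simp

theorem basis_mul {L : Type*} [Field L] [DecidableEq L] (s : Finset L) (x : L) (hx : x ∈ s) :
    ∃ c : L, (X - C x) * Lagrange.basis s id x = C c * ∏ y ∈ s, (X - C y) := by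
  refine ⟨∏ y ∈ s.erase x, (x - y)⁻¹, ?_⟩
  rw [← Finset.mul_prod_erase s _ hx]
  simp only [Lagrange.basis, Lagrange.basisDivisor, id, Finset.prod_mul_distrib, map_prod]
  ring

theorem main_aux (n : ℕ) (A : Matrix (Fin n) (Fin n) ℤ)
    (hirr : Irreducible (A.charpoly.map (Int.castRingHom ℚ)))
    (p : ℕ) (hp : p.Prime) (hcop : Nat.gcd n (tp A p) = 1)
    (T : Matrix (Fin n) (Fin n) ℚ)
    (hB : ∀ k : ℕ, ∃ (m : ℕ) (B : Matrix (Fin n) (Fin n) ℤ),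
      Aq A ^ m * T = B.map (Int.cast : ℤ → ℚ) * Aq A ^ k)
    (L : Type*) [Field L] [NumberField L] [Normal ℚ L]
    (hsp : ((A.charpoly.map (Int.castRingHom ℚ)).map (algebraMap ℚ L)).Splits) :
    T * Aq A = Aq A * T := by
  classical
  let R := NumberField.RingOfIntegers L
  set f := A.charpoly.map (Int.castRingHom ℚ) with hf
  have hmonicZ : A.charpoly.Monic := Matrix.charpoly_monic A
  have hmonic : f.Monic := hmonicZ.map _
  have hfL : f.map (algebraMap ℚ L) = A.charpoly.map (Int.castRingHom L) := by
    rw [hf, Polynomial.map_map]; congr 1; exact RingHom.ext_int _ _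
  set s : Finset L := (f.map (algebraMap ℚ L)).roots.toFinset with hs
  have hsep : (f.map (algebraMap ℚ L)).Separable := (hirr.separable).map
  have hsval : s.val = (f.map (algebraMap ℚ L)).roots := by
    rw [hs, Multiset.toFinset_val, Multiset.dedup_eq_self]
    exact Polynomial.nodup_roots hsep
  have hprod : f.map (algebraMap ℚ L) = ∏ y ∈ s, (X - C y) := by
    rw [hsp.eq_prod_roots_of_monic (hmonic.map _), Finset.prod, hsval]
  have hcard : s.card = n := by
    have h1 := congrArg Polynomial.natDegree hprod
    rw [Polynomial.natDegree_map, hf, hmonicZ.natDegree_map, Matrix.charpoly_natDegree_eq_dim,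
      Polynomial.natDegree_prod_of_monic _ _ (fun y _ => Polynomial.monic_X_sub_C y)] at h1
    simpa using h1.symm
  have hmem : ∀ x, x ∈ s ↔ Polynomial.aeval x f = 0 := by
    intro x
    rw [hs, Multiset.mem_toFinset, Polynomial.mem_roots (hmonic.map _).ne_zero,
      Polynomial.IsRoot.def, Polynomial.eval_map_algebraMap]
  have hmin : ∀ x ∈ s, minpoly ℚ x = f := fun x hx =>
    (minpoly.eq_of_irreducible_of_monic hirr ((hmem x).1 hx) hmonic).symm
  have hint : ∀ x, ∃ r : R, x ∈ s → (r : L) = x := by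
    intro x
    by_cases hx : x ∈ s
    · refine ⟨⟨x, A.charpoly, hmonicZ, ?_⟩, fun _ => rfl⟩
      have := (hmem x).1 hx
      rw [← Polynomial.eval_map_algebraMap, hfL] at this
      rw [Polynomial.eval₂_eq_eval_map]
      exact this
    · exact ⟨0, fun h => absurd h hx⟩
  choose ρ hρ using hint
  have hprodR : A.charpoly.map (Int.castRingHom R) = ∏ y ∈ s, (X - C (ρ y)) := by
    apply Polynomial.map_injective (algebraMap R L) NumberField.RingOfIntegers.coe_injective
    rw [Polynomial.map_map, Polynomial.map_prod]
    have : (algebraMap R L).comp (Int.castRingHom R) = Int.castRingHom L := RingHom.ext_int _ _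
    rw [this, ← hfL, hprod]
    refine Finset.prod_congr rfl fun y hy => ?_
    rw [Polynomial.map_sub, Polynomial.map_X, Polynomial.map_C]
    exact congrArg (fun z => X - C z) (hρ y hy).symm
  -- the prime
  have hpmax : (Ideal.span {(p : ℤ)}).IsMaximal :=
    PrincipalIdealRing.isMaximal_of_irreducible (Nat.prime_iff_prime_int.1 hp).irreducible
  obtain ⟨P, hPmax, hPover⟩ :=
    Ideal.exists_maximal_ideal_liesOver_of_isIntegral (Ideal.span {(p : ℤ)}) (S := R)
  have hpP : (p : R) ∈ P := by
    have h1 : (p : ℤ) ∈ P.under ℤ := hPover.over ▸ Ideal.mem_span_singleton_self (p : ℤ)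
    rw [Ideal.under_def, Ideal.mem_comap] at h1
    simpa using h1
  have hPprime : P.IsPrime := hPmax.isPrime
  set S := s.filter (fun y => ρ y ∈ P) with hS
  have hcount : tp A p = S.card := count_lemma P p hp hpP A.charpoly s ρ hprodR
  -- Galois action
  have hstab : ∀ (g : L ≃ₐ[ℚ] L) (x), x ∈ s → g • x ∈ s := by
    intro g x hx
    rw [hmem] at *
    have : g • x = g.toAlgHom x := rfl
    rw [this, Polynomial.aeval_algHom_apply, hx, map_zero]
  have hstab' : ∀ (g : L ≃ₐ[ℚ] L) (x), x ∈ s ↔ g x ∈ s := by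
    intro g x
    refine ⟨hstab g x, fun h => ?_⟩
    have := hstab g⁻¹ _ h
    rwa [← AlgEquiv.smul_def, inv_smul_smul] at this
  have htr : ∀ x ∈ s, ∀ y ∈ s, ∃ g : L ≃ₐ[ℚ] L, g • x = y := by
    intro x hx y hy
    have : y ∈ MulAction.orbit (L ≃ₐ[ℚ] L) x :=
      Normal.minpoly_eq_iff_mem_orbit (F := ℚ) L |>.1 ((hmin y hy).trans (hmin x hx).symm)
    exact this
  -- projections
  set AL := A.map (Int.cast : ℤ → L) with hAL
  have hAqmap : (Aq A).map (algebraMap ℚ L) = AL := by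
    ext i j; simp [Aq, hAL]
  have hCH : Polynomial.aeval AL (∏ y ∈ s, (X - C y)) = 0 := by
    rw [← hprod, hfL]
    have : A.charpoly.map (Int.castRingHom L) = AL.charpoly :=
      (Matrix.charpoly_map A (Int.castRingHom L)).symm
    rw [this, Matrix.aeval_self_charpoly]
  let F : L → Matrix (Fin n) (Fin n) L := fun x => Polynomial.aeval AL (Lagrange.basis s id x)
  have hFsum : ∑ x ∈ s, F x = 1 := by
    have hne : s.Nonempty := by
      rw [← Finset.card_pos, hcard]
      rcases Nat.eq_zero_or_pos n with h | h
      · exfalso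
        apply hirr.not_isUnit
        have : f.natDegree = 0 := by
          rw [hf, hmonicZ.natDegree_map, Matrix.charpoly_natDegree_eq_dim]; simp [h]
        rw [hmonic.natDegree_eq_zero.1 this]
        exact isUnit_one
      · exact h
    rw [← map_sum, Lagrange.sum_basis Function.injective_id.injOn hne, map_one]
  have hAF : ∀ x ∈ s, AL * F x = x • F x := by
    intro x hx
    obtain ⟨c, hc⟩ := basis_mul s x hx
    have := congrArg (Polynomial.aeval AL) hc
    rw [map_mul, map_mul, hCH, mul_zero, map_sub, Polynomial.aeval_X, Polynomial.aeval_C,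
      sub_mul, sub_eq_zero, ← Algebra.smul_def] at this
    exact this
  have hFA : ∀ x ∈ s, F x * AL = x • F x := by
    intro x hx
    rw [← hAF x hx]
    have h1 : AL = Polynomial.aeval AL (X : L[X]) := by simp
    have : Commute (F x) AL := by
      have h2 : Commute (F x) (Polynomial.aeval AL (X : L[X])) := by
        simp only [F]
        exact (Commute.all _ _).map (Polynomial.aeval AL)
      rwa [← h1] at h2
    exact this.eq
  have hFσ : ∀ (g : L ≃ₐ[ℚ] L) (x), (F x).map g = F (g x) := by
    intro g x
    have h1 := basis_map s (g : L ≃+* L) (hstab' g) x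
    simp only [F]
    have h2 : AL.map g = AL := by ext i j; simp [hAL]
    have h3 := Polynomial.map_aeval_eq_aeval_map (φ := ((g : L ≃+* L) : L →+* L))
      (ψ := ((g : L ≃+* L) : L →+* L).mapMatrix (m := Fin n))
      (by
        ext c i j
        by_cases hij : i = j
        · subst hij; simp [Matrix.algebraMap_matrix_apply]
        · simp [Matrix.algebraMap_matrix_apply, hij]) (Lagrange.basis s id x) AL
    rw [h1] at h3
    have h4 : ((g : L ≃+* L) : L →+* L).mapMatrix AL = AL := h2
    rw [h4] at h3
    exact h3
  set TL := T.map (algebraMap ℚ L) with hTL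
  have hTσ : ∀ g : L ≃ₐ[ℚ] L, TL.map g = TL := by
    intro g; ext i j; simp [hTL]
  have hzero : ∀ x ∈ s, ∀ y ∈ s, x ≠ y → F x * TL * F y = 0 := by
    intro x hx y hy hxy
    by_contra hne
    apply hxy
    refine comb (G := L ≃ₐ[ℚ] L) s S (Finset.filter_subset _ _) hstab htr
      (by rw [hcard, ← hcount, hcop]) x y hx hy ?_
    intro g hgy
    by_contra hgx
    have hgxs := hstab g x hx
    have hgys := hstab g y hy
    have ha : ρ (g • x) ∉ P := fun h => hgx (Finset.mem_filter.2 ⟨hgxs, h⟩)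
    have hb : ρ (g • y) ∈ P := (Finset.mem_filter.1 hgy).2
    have h0 := key_zero A T hB P (ρ (g • x)) (ρ (g • y)) ha hb (F (g • x)) (F (g • y))
      (by rw [hρ _ hgxs]; exact hFA _ hgxs) (by rw [hρ _ hgys]; exact hAF _ hgys)
    apply hne
    have h1 : (F x * TL * F y).map g = 0 := by
      have h2 : (F x * TL * F y).map g = (F x).map g * TL.map g * (F y).map g := by
        have := map_mul (((g : L ≃+* L) : L →+* L).mapMatrix (m := Fin n)) (F x * TL) (F y)
        have h3 := map_mul (((g : L ≃+* L) : L →+* L).mapMatrix (m := Fin n)) (F x) TL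
        rw [h3] at this
        exact this
      rw [h2, hFσ, hFσ, hTσ]
      exact h0
    ext i j
    have := congrFun (congrFun h1 i) j
    simpa using this
  have hT1 : ∀ x ∈ s, F x * TL = F x * TL * F x := by
    intro x hx
    conv_lhs => rw [← mul_one (F x * TL), ← hFsum, Finset.mul_sum]
    exact Finset.sum_eq_single_of_mem x hx fun y hy hyx => hzero x hx y hy hyx.symm
  have hT2 : TL = ∑ x ∈ s, F x * TL * F x := by
    conv_lhs => rw [← one_mul TL, ← hFsum, Finset.sum_mul]
    exact Finset.sum_congr rfl hT1
  have hcomm : TL * AL = AL * TL := by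
    rw [hT2, Finset.sum_mul, Finset.mul_sum]
    refine Finset.sum_congr rfl fun x hx => ?_
    rw [Matrix.mul_assoc, hFA x hx, ← Matrix.mul_assoc, ← Matrix.mul_assoc, hAF x hx]
    simp
  have hinj : Function.Injective ((algebraMap ℚ L).mapMatrix (m := Fin n)) :=
    Matrix.map_injective (algebraMap ℚ L).injective
  apply hinj
  rw [map_mul, map_mul]
  simp only [RingHom.mapMatrix_apply]
  rw [hAqmap]
  exact hcomm

/-- every `T ∈ End(G_A)` commutes with `A`. -/
theorem stmt7 (n : ℕ) (A : Matrix (Fin n) (Fin n) ℤ) (hA : A.det ≠ 0)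
    (hirr : Irreducible (A.charpoly.map (Int.castRingHom ℚ)))
    (hP' : (Pbad A).Nonempty)
    (hcop : ∃ p : ℕ, p.Prime ∧ Nat.gcd n (tp A p) = 1)
    (T : Matrix (Fin n) (Fin n) ℚ) (hT : ∀ v ∈ GA A, T *ᵥ v ∈ GA A) :
    T * Aq A = Aq A * T := by
  obtain ⟨p, hp, hc⟩ := hcop
  have : NumberField (A.charpoly.map (Int.castRingHom ℚ)).SplittingField :=
    { to_charZero := inferInstance
      to_finiteDimensional := inferInstance }
  have : Normal ℚ (A.charpoly.map (Int.castRingHom ℚ)).SplittingField := by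
    have h := @Normal.of_isSplittingField ℚ _
      (A.charpoly.map (Int.castRingHom ℚ)).SplittingField _
      _ (A.charpoly.map (Int.castRingHom ℚ))
      (Polynomial.IsSplittingField.splittingField _)
    convert h
  exact main_aux n A hirr p hp hc T (exists_B n A hA T hT)
    (A.charpoly.map (Int.castRingHom ℚ)).SplittingField (Polynomial.SplittingField.splits _)
end
end

section
/- Let A ∈ M_n(ℤ) be non-singular with h_A irreducible over ℚ and P'(A) ≠ ∅, and assume there exists a prime p with gcd(n, t_p) = 1. Then: (a) any two matrices S, T ∈ M_n(ℚ) each mapping G_A into G_A commute, so End(G_A) is a commutative ring; and (b) the group Aut(G_A) = {T ∈ M_n(ℚ) : T invertible and T(G_A) = G_A} (a group under matrix multiplication) is a finitely generated abelian group. -/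
open Matrix Polynomial

noncomputable section

/-- index of `p • M` in `M` -/
def idx (M : Type*) [AddCommGroup M] (p : ℕ) : ℕ := (nsmulAddMonoidHom (α := M) p).range.index

lemma idx_pi (H : Type*) [AddCommGroup H] (d p : ℕ) : idx (Fin d → H) p = idx H p ^ d := by
  unfold idx
  have : (nsmulAddMonoidHom (α := Fin d → H) p).range =
      AddSubgroup.pi Set.univ (fun _ : Fin d => (nsmulAddMonoidHom (α := H) p).range) := by
    ext x
    simp only [AddMonoidHom.mem_range, AddSubgroup.mem_pi, Set.mem_univ, true_imp_iff]
    constructor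
    · rintro ⟨y, rfl⟩ i
      exact ⟨y i, rfl⟩
    · intro h
      choose y hy using h
      exact ⟨y, funext hy⟩
  rw [this, AddSubgroup.index_pi]
  simp

lemma idx_eq {G M : Type*} [AddCommGroup G] [AddCommGroup M] [IsAddTorsionFree M]
    (f : G →+ M) (g : M →+ G) (N p : ℕ) (hN : N ≠ 0) (hp : p ≠ 0)
    (hf : Function.Injective f) (hfg : ∀ m, f (g m) = N • m)
    (hG : idx G N ≠ 0) : idx G p = idx M p := by
  have hgf : ∀ x, g (f x) = N • x := fun x => hf (by rw [hfg, map_nsmul])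
  have hg : Function.Injective g := by
    intro x y h
    have := congrArg f h
    rw [hfg, hfg] at this
    exact nsmul_right_injective hN this
  have h1 : f.range.map g = (nsmulAddMonoidHom (α := G) N).range := by
    ext x
    simp [hgf]
  have h2 := AddSubgroup.index_map_of_injective f.range hg
  rw [h1] at h2
  have h3 : f.range.index ≠ 0 := by
    intro h
    rw [h, zero_mul] at h2
    exact hG h2
  have h4 : (nsmulAddMonoidHom (α := G) p).range.map f =
      f.range.map (nsmulAddMonoidHom (α := M) p) := by
    ext x
    simp
  have h5 := AddSubgroup.index_map_of_injective (nsmulAddMonoidHom (α := G) p).range hf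
  have h6 := AddSubgroup.index_map_of_injective f.range
    (f := nsmulAddMonoidHom (α := M) p) (nsmul_right_injective hp)
  rw [h4, h6] at h5
  unfold idx
  rw [mul_comm] at h5
  exact (Nat.eq_of_mul_eq_mul_right (Nat.pos_of_ne_zero h3) h5).symm

/-- evaluation at `a` of classes modulo the characteristic polynomial -/
def adjHom {V : Type*} [AddCommGroup V] [Module ℚ V] [FiniteDimensional ℚ V]
    (a : Module.End ℚ V) : AdjoinRoot a.charpoly →ₐ[ℚ] Module.End ℚ V :=
  (Ideal.Quotient.liftₐ (Ideal.span {a.charpoly}) (aeval a) (by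
    intro q hq
    obtain ⟨r, rfl⟩ := Ideal.mem_span_singleton'.1 hq
    rw [map_mul, a.aeval_self_charpoly, mul_zero]) :
    (ℚ[X] ⧸ Ideal.span {a.charpoly}) →ₐ[ℚ] Module.End ℚ V)

lemma adjHom_mk {V : Type*} [AddCommGroup V] [Module ℚ V] [FiniteDimensional ℚ V]
    (a : Module.End ℚ V) (q : ℚ[X]) : adjHom a (AdjoinRoot.mk a.charpoly q) = aeval a q := rfl

/-- Cyclicity. -/
lemma cyc {V : Type*} [AddCommGroup V] [Module ℚ V] [FiniteDimensional ℚ V]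
    (a : Module.End ℚ V) (hirr : Irreducible a.charpoly) (v : V) (hv : v ≠ 0) (w : V) :
    ∃ q : ℚ[X], aeval a q v = w := by
  have : Fact (Irreducible a.charpoly) := ⟨hirr⟩
  let φ := adjHom a
  let L : AdjoinRoot a.charpoly →ₗ[ℚ] V := (LinearMap.applyₗ v).comp φ.toLinearMap
  have hL : ∀ k, L k = φ k v := fun k => rfl
  have hinj : Function.Injective L := by
    rw [injective_iff_map_eq_zero]
    intro k hk
    by_contra hk0
    apply hv
    have : φ (k⁻¹ * k) v = 0 := by
      rw [map_mul, Module.End.mul_apply, ← hL k, hk, map_zero]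
    rwa [inv_mul_cancel₀ hk0, map_one, Module.End.one_apply] at this
  have hmon := a.charpoly_monic
  have : FiniteDimensional ℚ (AdjoinRoot a.charpoly) := (AdjoinRoot.powerBasis hirr.ne_zero).finite
  have hfin : Module.finrank ℚ (AdjoinRoot a.charpoly) = Module.finrank ℚ V := by
    rw [(AdjoinRoot.powerBasis hirr.ne_zero).finrank, AdjoinRoot.powerBasis_dim,
      a.charpoly_natDegree]
  obtain ⟨k, hk⟩ := (LinearMap.injective_iff_surjective_of_finrank_eq_finrank hfin).1 hinj w
  obtain ⟨q, rfl⟩ := AdjoinRoot.mk_surjective k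
  refine ⟨q, ?_⟩
  rw [← hk, hL]
  rfl

/-- Commutant of `a` is `ℚ[a]`. -/
lemma commutant {V : Type*} [AddCommGroup V] [Module ℚ V] [FiniteDimensional ℚ V]
    (a : Module.End ℚ V) (hirr : Irreducible a.charpoly) (T : Module.End ℚ V)
    (hT : a * T = T * a) : ∃ q : ℚ[X], aeval a q = T := by
  by_cases hV : ∃ v : V, v ≠ 0
  · obtain ⟨v, hv⟩ := hV
    obtain ⟨q, hq⟩ := cyc a hirr v hv (T v)
    refine ⟨q, ?_⟩
    ext w
    obtain ⟨r, rfl⟩ := cyc a hirr v hv w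
    have h1 : Commute T (aeval a r) := by
      have : Commute T a := hT.symm
      have h2 : aeval a r ∈ Algebra.adjoin ℚ {a} := aeval_mem_adjoin_singleton ℚ a
      exact Algebra.commute_of_mem_adjoin_singleton_of_commute h2 this
    have h3 : Commute (aeval a q) (aeval a r) := by
      rw [Commute, SemiconjBy, ← map_mul, ← map_mul, mul_comm]
    have e1 := congrArg (fun f : Module.End ℚ V => f v) h1.eq
    have e3 := congrArg (fun f : Module.End ℚ V => f v) h3.eq
    simp only [Module.End.mul_apply] at e1 e3
    rw [e1, e3, hq]
  · push Not at hV
    exact ⟨0, by ext w; rw [hV w]; simp⟩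

lemma simpleV {V : Type*} [AddCommGroup V] [Module ℚ V] [FiniteDimensional ℚ V] [Nontrivial V]
    (a : Module.End ℚ V) (hirr : Irreducible a.charpoly) (E : Subalgebra ℚ (Module.End ℚ V))
    (ha : a ∈ E) : IsSimpleModule E V := by
  rw [isSimpleModule_iff_toSpanSingleton_surjective]
  refine ⟨inferInstance, fun v hv w => ?_⟩
  obtain ⟨q, hq⟩ := cyc a hirr v hv w
  have : aeval a q ∈ E := by
    have h2 : aeval a q ∈ Algebra.adjoin ℚ {a} := aeval_mem_adjoin_singleton ℚ a
    exact (Algebra.adjoin_le (by simpa using ha)) h2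
  exact ⟨⟨aeval a q, this⟩, hq⟩

lemma core {V : Type*} [AddCommGroup V] [Module ℚ V] [FiniteDimensional ℚ V] [Nontrivial V]
    (a : Module.End ℚ V) (hirr : Irreducible a.charpoly) (E : Subalgebra ℚ (Module.End ℚ V))
    (ha : a ∈ E) (G : AddSubgroup V) (hG : ∀ N : ℕ, N ≠ 0 → idx G N ≠ 0)
    (hE : ∀ e ∈ E, ∃ N : ℕ, N ≠ 0 ∧ ∀ g ∈ G, N • e g ∈ G)
    (p s : ℕ) (hp : p.Prime) (hs : idx G p = p ^ s) (hcop : Nat.Coprime (Module.finrank ℚ V) s) :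
    ∀ e ∈ E, a * e = e * a := by
  classical
  have hsimple := simpleV a hirr E ha
  let F := Module.End E V
  let _ : DivisionRing F := Module.End.instDivisionRing
  have htower : IsScalarTower ℚ F V := ⟨fun q f v => rfl⟩
  have hfinF : Module.Finite F V := Module.Finite.of_restrictScalars_finite ℚ F V
  have hdens : ∀ f : Module.End F V, ∃ e : E, ∀ v, f v = (e : Module.End ℚ V) v := by
    intro f
    obtain ⟨e, he⟩ := Module.Finite.toModuleEnd_moduleEnd_surjective (R := E) (M := V) f
    refine ⟨e, fun v => ?_⟩
    rw [← he]
    rfl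
  let d := Module.finrank F V
  let b : Module.Basis (Fin d) F V := Module.finBasis F V
  have hdn : d ∣ Module.finrank ℚ V :=
    Module.finrank_dvd_finrank_left (F := ℚ) (K := F) (A := V)
  let H : AddSubgroup F := AddSubgroup.closure {c | ∃ g ∈ G, ∃ i, b.repr g i = c}
  have hij : ∀ i j : Fin d, ∃ N : ℕ, N ≠ 0 ∧ ∀ g ∈ G, N • (b.repr g j • b i) ∈ G := by
    intro i j
    obtain ⟨e, he⟩ := hdens ((b.coord j).smulRight (b i))
    obtain ⟨N, hN, hg⟩ := hE e e.2
    refine ⟨N, hN, fun g hgG => ?_⟩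
    have := hg g hgG
    rw [← he] at this
    exact this
  choose Nf hNf0 hNf using hij
  let N : ℕ := ∏ i, ∏ j, Nf i j
  have hN0 : N ≠ 0 := Finset.prod_ne_zero_iff.2 fun i _ => Finset.prod_ne_zero_iff.2 fun j _ => hNf0 i j
  have hNdvd : ∀ i j, Nf i j ∣ N := fun i j =>
    (Finset.dvd_prod_of_mem (Nf i) (Finset.mem_univ j)).trans
      (Finset.dvd_prod_of_mem (fun i => ∏ j, Nf i j) (Finset.mem_univ i))
  have hNH : ∀ h ∈ H, ∀ i, N • (h • b i) ∈ G := by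
    intro h hh i
    induction hh using AddSubgroup.closure_induction with
    | mem x hx =>
      obtain ⟨g, hg, j, rfl⟩ := hx
      obtain ⟨c, hc⟩ := hNdvd i j
      rw [hc, mul_comm, mul_smul]
      exact G.nsmul_mem (hNf i j g hg) c
    | zero => simp
    | add x y _ _ hx hy =>
      rw [add_smul, smul_add]
      exact G.add_mem hx hy
    | neg x _ hx =>
      rw [neg_smul, smul_neg]
      exact G.neg_mem hx
  let f : G →+ (Fin d → H) :=
    { toFun := fun g i => ⟨b.repr g i, AddSubgroup.subset_closure ⟨g, g.2, i, rfl⟩⟩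
      map_zero' := by ext i; simp
      map_add' := by intro x y; ext i; simp }
  let g : (Fin d → H) →+ G :=
    { toFun := fun x => ⟨N • ∑ i, (x i : F) • b i, by
        rw [Finset.smul_sum]
        exact G.sum_mem fun i _ => hNH _ (x i).2 i⟩
      map_zero' := by ext; simp
      map_add' := by
        intro x y
        ext
        simp [add_smul, Finset.sum_add_distrib] }
  have hf : Function.Injective f := by
    intro x y hxy
    apply Subtype.ext
    apply b.repr.injective
    ext i : 1
    exact congrArg Subtype.val (congrFun hxy i)
  have hfg : ∀ m, f (g m) = N • m := by
    intro m
    funext i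
    apply Subtype.ext
    change b.repr (N • ∑ i, (m i : F) • b i) i = ((N • m i : H) : F)
    rw [map_nsmul, Finsupp.smul_apply, Module.Basis.repr_sum_self]
    rfl
  have htf : IsAddTorsionFree F := by
    exact IsAddTorsionFree.of_module_rat F
  have hidx := idx_eq f g N p hN0 hp.ne_zero hf hfg (hG N hN0)
  rw [idx_pi, hs] at hidx
  have hds : d ∣ s := by
    have hd0 : d ≠ 0 := Module.finrank_pos.ne'
    obtain ⟨r, -, hr⟩ := (Nat.dvd_prime_pow hp).1 (hidx ▸ dvd_pow_self (idx H p) hd0)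
    rw [hr, ← pow_mul] at hidx
    exact ⟨r, (Nat.pow_right_injective hp.two_le hidx).trans (mul_comm _ _)⟩
  have hd1 : d = 1 := Nat.eq_one_of_dvd_coprimes hcop hdn hds
  have hcom : ∀ (c : F), ∃ q : ℚ[X], ∀ v, c • v = aeval a q v := by
    intro c
    obtain ⟨q, hq⟩ := commutant a hirr (c.restrictScalars ℚ) (by
      ext v
      exact (c.map_smul (⟨a, ha⟩ : E) v).symm)
    exact ⟨q, fun v => by rw [hq]; rfl⟩
  have hcom2 : ∀ (c c' : F) (v : V), c • c' • v = c' • c • v := by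
    intro c c' v
    obtain ⟨q, hq⟩ := hcom c
    obtain ⟨q', hq'⟩ := hcom c'
    rw [hq, hq', hq, hq', ← Module.End.mul_apply, ← Module.End.mul_apply, ← map_mul, ← map_mul,
      mul_comm]
  have hlin : ∀ (e : E) (c : F) (v : V), (e : Module.End ℚ V) (c • v) = c • (e : Module.End ℚ V) v := by
    intro e c v
    exact (c.map_smul e v).symm
  obtain ⟨b0, -, hb0⟩ := finrank_eq_one_iff'.1 hd1
  intro e he
  ext v
  obtain ⟨c, rfl⟩ := hb0 v
  obtain ⟨ce, hce⟩ := hb0 (e b0)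
  obtain ⟨ca, hca⟩ := hb0 (a b0)
  have e1 := hlin ⟨e, he⟩
  have a1 := hlin ⟨a, ha⟩
  simp only at e1 a1
  simp only [Module.End.mul_apply]
  rw [e1, a1, a1, e1, ← hce, ← hca, e1, a1, ← hce, ← hca, hcom2 ce ca]

/-- integer vector viewed in `ℚ^n` -/
def iv {n : ℕ} : (Fin n → ℤ) →+ (Fin n → ℚ) where
  toFun x := fun i => (x i : ℚ)
  map_zero' := by ext; simp
  map_add' := by intros; ext; simp

lemma Aq_pow_iv {n : ℕ} (A : Matrix (Fin n) (Fin n) ℤ) (k : ℕ) (x : Fin n → ℤ) :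
    Aq A ^ k *ᵥ iv x = iv (A ^ k *ᵥ x) := by
  have : Aq A ^ k = (A ^ k).map (Int.castRingHom ℚ) := by
    rw [Matrix.map_pow]; rfl
  rw [this]
  ext i
  exact ((Int.castRingHom ℚ).map_mulVec (A ^ k) x i).symm

lemma Aq_det {n : ℕ} (A : Matrix (Fin n) (Fin n) ℤ) : (Aq A).det = (A.det : ℚ) :=
  ((Int.castRingHom ℚ).map_det A).symm

lemma Aq_unit {n : ℕ} (A : Matrix (Fin n) (Fin n) ℤ) (hA : A.det ≠ 0) : IsUnit (Aq A).det := by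
  rw [Aq_det]; exact (Int.cast_ne_zero.2 hA).isUnit

lemma mem_GA {n : ℕ} (A : Matrix (Fin n) (Fin n) ℤ) (hA : A.det ≠ 0) (v : Fin n → ℚ) :
    v ∈ GA A ↔ ∃ (k : ℕ) (x : Fin n → ℤ), Aq A ^ k *ᵥ v = iv x := by
  have hu := Aq_unit A hA
  constructor
  · rintro ⟨k, x, rfl⟩
    change ∃ (k' : ℕ) (x' : Fin n → ℤ), Aq A ^ k' *ᵥ (Aq A ^ k *ᵥ iv x) = iv x'
    obtain ⟨m, rfl | rfl⟩ := k.eq_nat_or_neg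
    · refine ⟨0, A ^ m *ᵥ x, ?_⟩
      rw [zpow_natCast, Aq_pow_iv, pow_zero, one_mulVec]
    · refine ⟨m, x, ?_⟩
      rw [mulVec_mulVec, ← zpow_natCast, ← Matrix.zpow_add hu]
      simp
  · rintro ⟨k, x, h⟩
    refine ⟨-(k : ℤ), x, ?_⟩
    change v = Aq A ^ (-(k : ℤ)) *ᵥ iv x
    rw [← h, mulVec_mulVec, ← zpow_natCast, ← Matrix.zpow_add hu]
    simp

/-- `G_A` as an additive subgroup. -/
def gA {n : ℕ} (A : Matrix (Fin n) (Fin n) ℤ) (hA : A.det ≠ 0) : AddSubgroup (Fin n → ℚ) where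
  carrier := GA A
  zero_mem' := (mem_GA A hA 0).2 ⟨0, 0, by simp⟩
  add_mem' := by
    intro v w hv hw
    rw [mem_GA A hA] at *
    obtain ⟨k, x, hx⟩ := hv
    obtain ⟨l, y, hy⟩ := hw
    refine ⟨k + l, A ^ l *ᵥ x + A ^ k *ᵥ y, ?_⟩
    rw [mulVec_add, map_add, ← Aq_pow_iv, ← Aq_pow_iv, ← hx, ← hy, mulVec_mulVec, mulVec_mulVec,
      ← pow_add, ← pow_add, add_comm l k]
  neg_mem' := by
    intro v hv
    rw [mem_GA A hA] at *
    obtain ⟨k, x, hx⟩ := hv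
    exact ⟨k, -x, by rw [mulVec_neg, hx, map_neg]⟩

/-- vectors mod `N` killed by a power of `A` -/
def nilV {n : ℕ} (A : Matrix (Fin n) (Fin n) ℤ) (N : ℕ) : AddSubgroup (Fin n → ZMod N) :=
  (Module.End.maxGenEigenspace (toLin' (A.map (Int.castRingHom (ZMod N)))) 0).toAddSubgroup

lemma mem_nilV {n : ℕ} (A : Matrix (Fin n) (Fin n) ℤ) (N : ℕ) (x : Fin n → ZMod N) :
    x ∈ nilV A N ↔ ∃ k : ℕ, (A.map (Int.castRingHom (ZMod N))) ^ k *ᵥ x = 0 := by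
  unfold nilV
  simp only [Submodule.mem_toAddSubgroup, Module.End.mem_maxGenEigenspace, zero_smul, sub_zero]
  simp only [← toLin'_pow, toLin'_apply]

/-- reduction mod `N` -/
def redV (n N : ℕ) : (Fin n → ℤ) →+ (Fin n → ZMod N) where
  toFun x := fun i => (x i : ZMod N)
  map_zero' := by ext; simp
  map_add' := by intros; ext; simp

lemma redV_surj (n N : ℕ) : Function.Surjective (redV n N) := by
  intro y
  choose x hx using fun i => ZMod.intCast_surjective (y i)
  exact ⟨x, funext hx⟩

lemma redV_pow {n : ℕ} (A : Matrix (Fin n) (Fin n) ℤ) (N k : ℕ) (x : Fin n → ℤ) :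
    (A.map (Int.castRingHom (ZMod N))) ^ k *ᵥ redV n N x = redV n N (A ^ k *ᵥ x) := by
  rw [← Matrix.map_pow]
  ext i
  exact ((Int.castRingHom (ZMod N)).map_mulVec (A ^ k) x i).symm

lemma redV_zero {n N : ℕ} (x : Fin n → ℤ) : redV n N x = 0 ↔ ∃ z, x = N • z := by
  constructor
  · intro h
    have : ∀ i, ∃ z : ℤ, x i = N * z := fun i => by
      have := congrFun h i
      exact (ZMod.intCast_zmod_eq_zero_iff_dvd _ _).1 this
    choose z hz using this
    exact ⟨z, by ext i; simp [hz i]⟩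
  · rintro ⟨z, rfl⟩
    ext i
    simp [redV]

lemma idx_GA {n : ℕ} (A : Matrix (Fin n) (Fin n) ℤ) (hA : A.det ≠ 0) (N : ℕ) (hN : N ≠ 0) :
    idx (gA A hA) N = (nilV A N).index := by
  have : NeZero N := ⟨hN⟩
  let f0 : (Fin n → ℤ) →+ gA A hA := iv.codRestrict (gA A hA) (fun x =>
    (mem_GA A hA _).2 ⟨0, x, by simp⟩)
  let P := (nsmulAddMonoidHom (α := gA A hA) N).range
  let f : (Fin n → ℤ) →+ gA A hA ⧸ P := (QuotientAddGroup.mk' P).comp f0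
  have memP : ∀ g : gA A hA, g ∈ P ↔ ∃ (k : ℕ) (z : Fin n → ℤ), Aq A ^ k *ᵥ (g : Fin n → ℚ) = N • iv z := by
    intro g
    constructor
    · rintro ⟨w, rfl⟩
      obtain ⟨k, z, h⟩ := (mem_GA A hA _).1 w.2
      refine ⟨k, z, ?_⟩
      rw [← h]
      change Aq A ^ k *ᵥ (N • (w : Fin n → ℚ)) = _
      rw [mulVec_smul]
    · rintro ⟨k, z, h⟩
      have hNQ : (N : ℚ) ≠ 0 := Nat.cast_ne_zero.2 hN
      have hw : (N : ℚ)⁻¹ • (g : Fin n → ℚ) ∈ gA A hA := (mem_GA A hA _).2 ⟨k, z, by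
        rw [mulVec_smul, h, ← Nat.cast_smul_eq_nsmul ℚ, inv_smul_smul₀ hNQ]⟩
      refine ⟨⟨_, hw⟩, ?_⟩
      apply Subtype.ext
      change N • ((N : ℚ)⁻¹ • (g : Fin n → ℚ)) = g
      rw [← Nat.cast_smul_eq_nsmul ℚ, smul_inv_smul₀ hNQ]
  have hiv : Function.Injective (iv (n := n)) := by
    intro x y h
    ext i
    exact Int.cast_injective (congrFun h i)
  have hker : f.ker = (nilV A N).comap (redV n N) := by
    ext x
    rw [AddMonoidHom.mem_ker, AddSubgroup.mem_comap, mem_nilV]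
    change (QuotientAddGroup.mk (f0 x) : gA A hA ⧸ P) = 0 ↔ _
    rw [QuotientAddGroup.eq_zero_iff, memP]
    refine exists_congr fun k => ?_
    rw [redV_pow, redV_zero]
    refine exists_congr fun z => ?_
    change Aq A ^ k *ᵥ iv x = _ ↔ _
    rw [Aq_pow_iv, ← map_nsmul, hiv.eq_iff]
  have hsurj : Function.Surjective f := by
    intro g
    obtain ⟨g, rfl⟩ := QuotientAddGroup.mk_surjective g
    obtain ⟨k, x, hx⟩ := (mem_GA A hA _).1 g.2
    have hfin : Finite (Matrix (Fin n) (Fin n) (ZMod N)) := inferInstance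
    let B := A.map (Int.castRingHom (ZMod N))
    obtain ⟨a, c, hac, hB⟩ : ∃ a c : ℕ, 0 < c ∧ B ^ a = B ^ (a + c) := by
      obtain ⟨i, j, hij, h⟩ := Finite.exists_ne_map_eq_of_infinite (fun k : ℕ => B ^ k)
      rcases lt_or_gt_of_ne hij with h' | h'
      · exact ⟨i, j - i, by lia, by rw [show i + (j - i) = j by lia]; exact h⟩
      · exact ⟨j, i - j, by lia, by rw [show j + (i - j) = i by lia]; exact h.symm⟩
    have hB2 : ∀ m : ℕ, B ^ a = B ^ (a + m * c) := by
      intro m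
      induction m with
      | zero => simp
      | succ m ih =>
        rw [ih, show a + (m + 1) * c = (a + c) + m * c by ring, pow_add, pow_add, ← hB]
    obtain ⟨c', rfl⟩ : ∃ c', c = c' + 1 := ⟨c - 1, by lia⟩
    let y := A ^ (k * c') *ᵥ x
    refine ⟨y, ?_⟩
    change QuotientAddGroup.mk (f0 y) = (QuotientAddGroup.mk g : gA A hA ⧸ P)
    rw [QuotientAddGroup.eq, memP]
    have h0 : redV n N (-(A ^ (a + k) *ᵥ y) + A ^ a *ᵥ x) = 0 := by
      rw [map_add, map_neg, ← redV_pow, ← redV_pow, ← redV_pow, mulVec_mulVec, ← pow_add]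
      change -(B ^ _ *ᵥ _) + B ^ a *ᵥ _ = 0
      rw [hB2 k, show a + k + k * c' = a + k * (c' + 1) by ring, neg_add_cancel]
    obtain ⟨z, hz⟩ := (redV_zero _).1 h0
    refine ⟨a + k, z, ?_⟩
    rw [← map_nsmul, ← hz]
    change Aq A ^ (a + k) *ᵥ (-(iv y) + (g : Fin n → ℚ)) = _
    rw [mulVec_add, mulVec_neg, Aq_pow_iv, pow_add (Aq A), ← mulVec_mulVec (g : Fin n → ℚ), hx, Aq_pow_iv]
    simp
  calc idx (gA A hA) N = Nat.card (gA A hA ⧸ P) := rfl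
    _ = Nat.card f.range := by
      rw [AddMonoidHom.range_eq_top.2 hsurj]; exact AddSubgroup.card_top.symm
    _ = f.ker.index := (AddSubgroup.index_ker f).symm
    _ = _ := by rw [hker, AddSubgroup.index_comap_of_surjective _ (redV_surj n N)]

lemma idx_GA_ne {n : ℕ} (A : Matrix (Fin n) (Fin n) ℤ) (hA : A.det ≠ 0) (N : ℕ) (hN : N ≠ 0) :
    idx (gA A hA) N ≠ 0 := by
  have : NeZero N := ⟨hN⟩
  rw [idx_GA A hA N hN]
  exact AddSubgroup.FiniteIndex.index_ne_zero

lemma idx_GA_p {n : ℕ} (A : Matrix (Fin n) (Fin n) ℤ) (hA : A.det ≠ 0) (p : ℕ) (hp : p.Prime) :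
    ∃ s, idx (gA A hA) p = p ^ s ∧ s + tp A p = n := by
  have : Fact p.Prime := ⟨hp⟩
  rw [idx_GA A hA p hp.ne_zero]
  let W := Module.End.maxGenEigenspace (toLin' (A.map (Int.castRingHom (ZMod p)))) 0
  refine ⟨Module.finrank (ZMod p) ((Fin n → ZMod p) ⧸ W), ?_, ?_⟩
  · change Nat.card ((Fin n → ZMod p) ⧸ W) = _
    rw [Module.natCard_eq_pow_finrank (K := ZMod p), Nat.card_zmod]
  · have h1 := W.finrank_quotient_add_finrank
    have h2 := (toLin' (A.map (Int.castRingHom (ZMod p)))).finrank_maxGenEigenspace_zero_eq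
    rw [Module.finrank_fin_fun] at h1
    rw [charpoly_toLin', ← rootMultiplicity_eq_natTrailingDegree'] at h2
    unfold tp
    rw [← Matrix.charpoly_map, ← h2]
    exact h1

open IsDedekindDomain NumberField in
/-- Dirichlet's S-unit theorem (finite generation). -/
lemma sunit_fg (K : Type*) [Field K] [NumberField K] (m : ℤ) (hm : m ≠ 0) (U : Subgroup Kˣ)
    (hU : ∀ u ∈ U, ∃ r : ℕ, IsIntegral ℤ ((m : K) ^ r * (u : K))) : Group.FG U := by
  classical
  let S : Set (HeightOneSpectrum (𝓞 K)) := {v | (m : 𝓞 K) ∈ v.asIdeal}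
  have hm0 : (m : 𝓞 K) ≠ 0 := Int.cast_ne_zero.2 hm
  have hS : S.Finite := by
    have := Ideal.finite_factors (R := 𝓞 K) (I := Ideal.span {(m : 𝓞 K)}) (by simpa using hm0)
    refine this.subset fun v hv => ?_
    exact Ideal.dvd_span_singleton.2 hv
  have hle : ∀ u ∈ U, ∀ v : HeightOneSpectrum (𝓞 K), v ∉ S → v.valuation K (u : K) ≤ 1 := by
    intro u hu v hv
    obtain ⟨r, hr⟩ := hU u hu
    have h1 : v.valuation K (m : K) = 1 := by
      have := (v.valuation_eq_one_iff_notMem (K := K) (r := (m : 𝓞 K))).2 hv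
      simpa using this
    have h2 := v.valuation_le_one (K := K) (⟨_, hr⟩ : 𝓞 K)
    change v.valuation K ((m : K) ^ r * (u : K)) ≤ 1 at h2
    simpa [h1] using h2
  have heq : ∀ u ∈ U, ∀ v : HeightOneSpectrum (𝓞 K), v ∉ S → v.valuation K (u : K) = 1 := by
    intro u hu v hv
    refine eq_one_of_one_le_mul_left (hle u hu v hv) (hle u⁻¹ (U.inv_mem hu) v hv) ?_
    rw [← map_mul]
    simp
  have := hS.to_subtype
  let f : Kˣ →* (S → Multiplicative ℤ) :=
    MonoidHom.pi fun v => (v : HeightOneSpectrum (𝓞 K)).valuationOfNeZero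
  -- work additively
  let U' : Submodule ℤ (Additive Kˣ) := (Subgroup.toAddSubgroup U).toIntSubmodule
  let f' : Additive Kˣ →ₗ[ℤ] (S → ℤ) := AddMonoidHom.toIntLinearMap
    { toFun := fun u v => Multiplicative.toAdd (f u.toMul v)
      map_zero' := by ext; simp
      map_add' := by intros; ext; simp }
  have hU' : U'.FG := by
    apply Submodule.fg_of_fg_map_of_fg_inf_ker f'
    · exact IsNoetherian.noetherian _
    · let ι : Additive (𝓞 K)ˣ →ₗ[ℤ] Additive Kˣ := AddMonoidHom.toIntLinearMap
        (MonoidHom.toAdditive (Units.map (algebraMap (𝓞 K) K : 𝓞 K →* K)))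
      have hn : IsNoetherian ℤ (Additive (𝓞 K)ˣ) := inferInstance
      have hsub : U' ⊓ LinearMap.ker f' ≤ LinearMap.range ι := by
        rintro u ⟨hu, hk⟩
        have hu1 : u.toMul ∈ U := hu
        have hall : ∀ v : HeightOneSpectrum (𝓞 K), v.valuation K (u.toMul : K) = 1 := by
          intro v
          by_cases hv : v ∈ S
          · have h3 : f' u ⟨v, hv⟩ = 0 := congrFun hk ⟨v, hv⟩
            have h4 : v.valuationOfNeZero u.toMul = 1 := h3
            rw [← HeightOneSpectrum.valuationOfNeZero_eq, h4]
            rfl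
          · exact heq _ hu1 v hv
        obtain ⟨x, hx⟩ := HeightOneSpectrum.mem_integers_of_valuation_le_one K (u.toMul : K)
          (fun v => (hall v).le)
        obtain ⟨y, hy⟩ := HeightOneSpectrum.mem_integers_of_valuation_le_one K ((u.toMul⁻¹ : Kˣ) : K)
          (fun v => by rw [Units.val_inv_eq_inv_val, map_inv₀, hall v, inv_one])
        have hxy : x * y = 1 := by
          apply FaithfulSMul.algebraMap_injective (𝓞 K) K
          rw [map_mul, hx, hy, map_one]
          simp
        refine ⟨Additive.ofMul ⟨x, y, hxy, by rw [mul_comm]; exact hxy⟩, ?_⟩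
        apply Additive.toMul.injective
        apply Units.ext
        exact hx
      have : IsNoetherian ℤ (LinearMap.range ι) := inferInstance
      exact (isNoetherian_submodule.1 this) _ hsub
  rw [Group.fg_iff_subgroup_fg, Subgroup.fg_iff_add_fg]
  rw [Submodule.fg_iff_addSubgroup_fg] at hU'
  exact hU'

/-- Endomorphisms of `ℚ^n` some positive multiple of which preserves `G`. -/
def qEnd {V : Type*} [AddCommGroup V] [Module ℚ V] (G : AddSubgroup V) :
    Subalgebra ℚ (Module.End ℚ V) where
  carrier := {e | ∃ N : ℕ, N ≠ 0 ∧ ∀ g ∈ G, N • e g ∈ G}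
  mul_mem' := by
    rintro e f ⟨N, hN, h⟩ ⟨M, hM, h'⟩
    refine ⟨N * M, mul_ne_zero hN hM, fun g hg => ?_⟩
    have := h _ (h' g hg)
    rw [map_nsmul] at this
    rw [mul_smul]
    exact this
  add_mem' := by
    rintro e f ⟨N, hN, h⟩ ⟨M, hM, h'⟩
    refine ⟨N * M, mul_ne_zero hN hM, fun g hg => ?_⟩
    rw [LinearMap.add_apply, smul_add]
    refine G.add_mem ?_ ?_
    · rw [mul_comm, mul_smul]; exact G.nsmul_mem (h g hg) M
    · rw [mul_smul]; exact G.nsmul_mem (h' g hg) N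
  algebraMap_mem' := by
    intro q
    refine ⟨q.den, q.den_ne_zero, fun g hg => ?_⟩
    rw [Module.algebraMap_end_apply, ← Nat.cast_smul_eq_nsmul ℚ, smul_smul, Rat.den_mul_eq_num,
      Int.cast_smul_eq_zsmul]
    exact G.zsmul_mem hg _

lemma adj_pow {n : ℕ} (A : Matrix (Fin n) (Fin n) ℤ) (k : ℕ) (v : Fin n → ℚ) :
    Aq A.adjugate ^ k *ᵥ (Aq A ^ k *ᵥ v) = ((A.det : ℚ) ^ k) • v := by
  have h1 : Aq A.adjugate * Aq A = (A.det : ℚ) • 1 := by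
    have := congrArg (fun M : Matrix (Fin n) (Fin n) ℤ => (Int.castRingHom ℚ).mapMatrix M)
      A.adjugate_mul
    simp only [map_mul] at this
    refine this.trans ?_
    ext i j
    change ((A.det * (1 : Matrix (Fin n) (Fin n) ℤ) i j : ℤ) : ℚ) =
      (A.det : ℚ) * (1 : Matrix (Fin n) (Fin n) ℚ) i j
    by_cases hij : i = j
    · subst hij; simp
    · simp [Matrix.one_apply_ne hij]
  have h2 : Aq A * Aq A.adjugate = (A.det : ℚ) • 1 := by
    have := congrArg (fun M : Matrix (Fin n) (Fin n) ℤ => (Int.castRingHom ℚ).mapMatrix M)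
      A.mul_adjugate
    simp only [map_mul] at this
    refine this.trans ?_
    ext i j
    change ((A.det * (1 : Matrix (Fin n) (Fin n) ℤ) i j : ℤ) : ℚ) =
      (A.det : ℚ) * (1 : Matrix (Fin n) (Fin n) ℚ) i j
    by_cases hij : i = j
    · subst hij; simp
    · simp [Matrix.one_apply_ne hij]
  have hc : Commute (Aq A.adjugate) (Aq A) := h1.trans h2.symm
  rw [mulVec_mulVec, ← hc.mul_pow, h1, _root_.smul_pow, one_pow, smul_mulVec, one_mulVec]

lemma clear_den {n : ℕ} (A : Matrix (Fin n) (Fin n) ℤ) (hA : A.det ≠ 0)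
    (T : Matrix (Fin n) (Fin n) ℚ) (hT : ∀ v ∈ GA A, T *ᵥ v ∈ GA A) :
    ∃ (r : ℕ), IsIntegral ℤ ((A.det : ℚ) ^ r • T) := by
  have h : ∀ j : Fin n, ∃ (k : ℕ) (x : Fin n → ℤ), (A.det : ℚ) ^ k • T.col j = iv x := by
    intro j
    have hj : iv (Pi.single j 1) ∈ GA A := (mem_GA A hA _).2 ⟨0, Pi.single j 1, by simp⟩
    obtain ⟨k, x, hx⟩ := (mem_GA A hA _).1 (hT _ hj)
    refine ⟨k, A.adjugate ^ k *ᵥ x, ?_⟩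
    rw [← Aq_pow_iv, ← hx, adj_pow]
    congr 1
    have : (iv (Pi.single j 1) : Fin n → ℚ) = Pi.single j 1 := by
      ext i
      by_cases hij : i = j
      · subst hij; simp [iv]
      · simp [iv, hij]
    rw [this, mulVec_single_one]
  choose k x hx using h
  let r := ∑ j, k j
  have hr : ∀ j, k j ≤ r := fun j => Finset.single_le_sum (f := k) (fun _ _ => Nat.zero_le _) (Finset.mem_univ j)
  let B : Matrix (Fin n) (Fin n) ℤ := Matrix.of fun i j => A.det ^ (r - k j) * x j i
  refine ⟨r, ?_⟩
  have hB : (A.det : ℚ) ^ r • T = (Algebra.ofId ℤ ℚ).mapMatrix B := by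
    ext i j
    have h1 := congrFun (hx j) i
    have h2 : (A.det : ℚ) ^ (k j) * T i j = x j i := h1
    change (A.det : ℚ) ^ r * T i j = ((A.det ^ (r - k j) * x j i : ℤ) : ℚ)
    rw [Int.cast_mul, Int.cast_pow, ← h2, ← mul_assoc, ← pow_add, Nat.sub_add_cancel (hr j)]
  rw [hB]
  exact (Matrix.isIntegral B).map _

lemma fg_of_field {R : Type*} [Ring R] [Nontrivial R] (K : Type*) [Field K] [NumberField K]
    (ψ : K →+* R) (m : ℤ) (hm : m ≠ 0) (H : Subgroup Rˣ)
    (h1 : ∀ T ∈ H, ∃ k : K, ψ k = T) (h2 : ∀ T ∈ H, ∃ r : ℕ, IsIntegral ℤ ((m : R) ^ r * (T : R))) :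
    Group.FG H := by
  have hψ : Function.Injective ψ := ψ.injective
  let Ψ : Kˣ →* Rˣ := Units.map (ψ : K →* R)
  have hUfg : Group.FG (H.comap Ψ) := by
    apply sunit_fg _ m hm
    intro u hu
    obtain ⟨r, hr⟩ := h2 _ hu
    refine ⟨r, ?_⟩
    rw [← isIntegral_algHom_iff ψ.toIntAlgHom hψ]
    convert hr using 1
    change ψ ((m : K) ^ r * (u : K)) = (m : R) ^ r * ψ u
    simp
  have hHU : H = (H.comap Ψ).map Ψ := by
    apply le_antisymm
    · intro T hT
      obtain ⟨k, hk⟩ := h1 T hT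
      have hk0 : k ≠ 0 := by
        rintro rfl
        rw [map_zero] at hk
        exact T.ne_zero hk.symm
      have e : Ψ (Units.mk0 _ hk0) = T := Units.ext hk
      refine ⟨Units.mk0 _ hk0, ?_, e⟩
      change Ψ (Units.mk0 _ hk0) ∈ H
      rw [e]
      exact hT
    · exact Subgroup.map_comap_le _ _
  have hr : (Ψ.comp (H.comap Ψ).subtype).range = H := by
    rw [MonoidHom.range_comp, Subgroup.range_subtype, ← hHU]
  rw [← hr]
  exact Group.fg_range _

/-- `End(G_A)` is commutative and `Aut(G_A)` is a finitely generated
abelian group. -/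
theorem stmt9 (n : ℕ) (A : Matrix (Fin n) (Fin n) ℤ) (hA : A.det ≠ 0)
    (hirr : Irreducible (A.charpoly.map (Int.castRingHom ℚ)))
    (hP' : (Pbad A).Nonempty)
    (hcop : ∃ p : ℕ, p.Prime ∧ Nat.gcd n (tp A p) = 1) :
    ((∀ S T : Matrix (Fin n) (Fin n) ℚ,
        (∀ v ∈ GA A, S *ᵥ v ∈ GA A) → (∀ v ∈ GA A, T *ᵥ v ∈ GA A) →
        S * T = T * S) ∧
      ∃ H : Subgroup (Matrix (Fin n) (Fin n) ℚ)ˣ,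
        (∀ T : (Matrix (Fin n) (Fin n) ℚ)ˣ,
          T ∈ H ↔ (fun w => (T : Matrix (Fin n) (Fin n) ℚ) *ᵥ w) '' GA A = GA A) ∧
        (∀ a b : H, a * b = b * a) ∧ Group.FG H) := by
  classical
  have hn : n ≠ 0 := by
    rintro rfl
    apply hirr.not_isUnit
    rw [Matrix.charpoly, Matrix.det_isEmpty]
    simp
  have : NeZero n := ⟨hn⟩
  have : Nontrivial (Fin n → ℚ) := inferInstance
  let a : Module.End ℚ (Fin n → ℚ) := toLin' (Aq A)
  have hch : a.charpoly = A.charpoly.map (Int.castRingHom ℚ) := by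
    rw [← Matrix.charpoly_map]
    exact charpoly_toLin' _
  have hirr' : Irreducible a.charpoly := by rw [hch]; exact hirr
  have haG : ∀ v ∈ GA A, Aq A *ᵥ v ∈ GA A := by
    intro v hv
    rw [mem_GA A hA] at *
    obtain ⟨k, x, hx⟩ := hv
    refine ⟨k, A ^ 1 *ᵥ x, ?_⟩
    rw [← Aq_pow_iv, ← hx, mulVec_mulVec, mulVec_mulVec, pow_one, ← pow_succ, ← pow_succ']
  have hmemE : ∀ T : Matrix (Fin n) (Fin n) ℚ, (∀ v ∈ GA A, T *ᵥ v ∈ GA A) →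
      toLin' T ∈ qEnd (gA A hA) := by
    intro T hT
    refine ⟨1, one_ne_zero, fun g hg => ?_⟩
    rw [one_smul]
    exact hT g hg
  obtain ⟨p, hp, hpc⟩ := hcop
  obtain ⟨s, hs, hst⟩ := idx_GA_p A hA p hp
  have hcs : Nat.Coprime (Module.finrank ℚ (Fin n → ℚ)) s := by
    rw [Module.finrank_fin_fun]
    have h1 : Nat.Coprime (s + tp A p) (tp A p) := by rw [hst]; exact hpc
    rw [← hst]
    simp only [Nat.coprime_add_self_left, Nat.coprime_self_add_left] at h1 ⊢
    exact h1.symm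
  have hcore := core a hirr' (qEnd (gA A hA)) (hmemE _ haG) (gA A hA) (idx_GA_ne A hA)
    (fun e he => he) p s hp hs hcs
  have hpoly : ∀ T : Matrix (Fin n) (Fin n) ℚ, (∀ v ∈ GA A, T *ᵥ v ∈ GA A) →
      ∃ q : ℚ[X], aeval a q = toLin' T := fun T hT =>
    commutant a hirr' _ (hcore _ (hmemE T hT))
  have hcomm : ∀ S T : Matrix (Fin n) (Fin n) ℚ,
        (∀ v ∈ GA A, S *ᵥ v ∈ GA A) → (∀ v ∈ GA A, T *ᵥ v ∈ GA A) → S * T = T * S := by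
    intro S T hS hT
    obtain ⟨q, hq⟩ := hpoly S hS
    obtain ⟨r, hr⟩ := hpoly T hT
    apply toLin'.injective
    rw [toLin'_mul, toLin'_mul, ← hq, ← hr]
    change aeval a q * aeval a r = aeval a r * aeval a q
    rw [← map_mul, ← map_mul, mul_comm]
  refine ⟨hcomm, ?_⟩
  let H : Subgroup (Matrix (Fin n) (Fin n) ℚ)ˣ :=
    { carrier := {T | (fun w => (T : Matrix (Fin n) (Fin n) ℚ) *ᵥ w) '' GA A = GA A}
      one_mem' := by simp
      mul_mem' := by
        intro S T hS hT
        simp only [Set.mem_ofPred_eq] at *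
        conv_rhs => rw [← hS, ← hT]
        rw [Set.image_image]
        simp
      inv_mem' := by
        intro S hS
        simp only [Set.mem_ofPred_eq] at *
        conv_lhs => rw [← hS]
        rw [Set.image_image]
        simp }
  have hHmem : ∀ T ∈ H, ∀ v ∈ GA A, (T : Matrix (Fin n) (Fin n) ℚ) *ᵥ v ∈ GA A := by
    intro T hT v hv
    have hT' : (fun w => (T : Matrix (Fin n) (Fin n) ℚ) *ᵥ w) '' GA A = GA A := hT
    rw [← hT']
    exact ⟨v, hv, rfl⟩
  refine ⟨H, fun T => Iff.rfl, ?_, ?_⟩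
  · rintro ⟨S, hS⟩ ⟨T, hT⟩
    apply Subtype.ext
    apply Units.ext
    exact hcomm _ _ (hHmem S hS) (hHmem T hT)
  have : Fact (Irreducible a.charpoly) := ⟨hirr'⟩
  have : FiniteDimensional ℚ (AdjoinRoot a.charpoly) :=
    (AdjoinRoot.powerBasis hirr'.ne_zero).finite
  have : NumberField (AdjoinRoot a.charpoly) :=
    { to_charZero := charZero_of_injective_algebraMap (algebraMap ℚ (AdjoinRoot a.charpoly)).injective
      to_finiteDimensional := by convert this }
  let ψ : AdjoinRoot a.charpoly →ₐ[ℚ] Matrix (Fin n) (Fin n) ℚ :=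
    (LinearMap.toMatrixAlgEquiv' (R := ℚ) (n := Fin n)).toAlgHom.comp (adjHom a)
  refine fg_of_field (AdjoinRoot a.charpoly) (ψ : AdjoinRoot a.charpoly →+* _) A.det hA H ?_ ?_
  · intro T hT
    obtain ⟨q, hq⟩ := hpoly _ (hHmem T hT)
    refine ⟨AdjoinRoot.mk _ q, ?_⟩
    change LinearMap.toMatrixAlgEquiv' (aeval a q) = _
    rw [hq]
    exact LinearMap.toMatrix'_toLin' _
  · intro T hT
    obtain ⟨r, hr⟩ := clear_den A hA _ (hHmem _ hT)
    refine ⟨r, ?_⟩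
    convert hr using 1
    · exact Subsingleton.elim _ _
    · rw [Algebra.smul_def]
      simp
end
end
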